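/- There exists a real number a ∈ (0, 1/7) such that the iterated function system 𝒮₁(a) = {x/7, x/7 + a, x/7 + 6/7} on ℝ satisfies the weak separation property, does not satisfy the convex finite type condition, and its attractor K satisfies 0 < dim_H(K) < 1, where dim_H denotes Hausdorff dimension. -/

import Mathlib

open Set

/-- The IFS 𝒮₁(a) = {x/7, x/7 + a, x/7 + 6/7} on ℝ. -/
noncomputable def S1 (a : ℝ) : Fin 3 → ℝ → ℝ :=
  ![fun x => x / 7, fun x => x / 7 + a, fun x => x / 7 + 6 / 7]

/-- For a word σ = (s₁,…,s_k), the composition S_σ = S_{s₁} ∘ ⋯ ∘ S_{s_k}. -/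
noncomputable def Sw1 (a : ℝ) : List (Fin 3) → ℝ → ℝ
  | [] => id
  | i :: σ => S1 a i ∘ Sw1 a σ

/-- For words σ, τ of the same length k, S_σ⁻¹ ∘ S_τ is the translation by
`amt1 a σ τ = 7 ^ k * (S_τ(0) − S_σ(0))`. -/
noncomputable def amt1 (a : ℝ) (σ τ : List (Fin 3)) : ℝ :=
  7 ^ σ.length * (Sw1 a τ 0 - Sw1 a σ 0)

/-- The weak separation property for 𝒮₁(a): the nonzero translation amounts
`a_{σ,τ}` over pairs of words of equal length are bounded away from 0. -/
def WSP1 (a : ℝ) : Prop :=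
  ∃ ε > 0, ∀ σ τ : List (Fin 3), σ.length = τ.length →
    amt1 a σ τ ≠ 0 → ε ≤ |amt1 a σ τ|

/-- The neighbourhood type of a word σ relative to the open interval (0,1). -/
noncomputable def Ntype1 (a : ℝ) (σ : List (Fin 3)) : Set ℝ :=
  { t | ∃ τ : List (Fin 3), τ.length = σ.length ∧
      (Sw1 a σ '' Ioo 0 1 ∩ Sw1 a τ '' Ioo 0 1).Nonempty ∧ t = amt1 a σ τ }

/-- The convex finite type condition: only finitely many neighbourhood types
relative to (0,1). -/
def FTCco1 (a : ℝ) : Prop := (Set.range (Ntype1 a)).Finite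

/-!
Write `a = (1 - δ) / 7` with `δ` small. The translation amounts are generated from `0` by the steps
`t ↦ 7 * t + d` with `d ∈ {0, ±(1 - δ), ±6, ±(5 + δ)}`. The steps `t ↦ 7 * t - 6` fix `1`, so they
take `1 - x` to `1 - 7 ^ n * x` after `n` iterations; from the right place near `4 / 5`, two steps
`t ↦ 7 * t - (5 + δ)` then land close to `-1`. One can tune `δ = v 0` so that this excursion,
started at `1 - v k`, ends exactly at `-(1 - v (k + 1))` with `v` decreasing to `0`. This yields
infinitely many amounts in `(-1, 1)`, so the convex finite type condition fails. Any other choice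
of steps either leaves `(-1, 1)`, where the expansion prevents a return, or passes, up to sign,
through `[3 / 10, 1 / 2]`, from which every step leaves `(-1, 1)`; hence no nonzero amount has
absolute value below `3 / 10`.

The dimension bounds hold for every `a`: `K` is covered by `3 ^ n` sets of diameter
`7 ^ (-n) * diam K`, so `dimH K ≤ log 3 / log 7`, and `K` contains the numbers with base `7` digits
in `{0, 6}`, which a Hölder map of exponent `log 2 / log 7` sends onto `[0, 1]`.
-/

section Dimension

open ENNReal MeasureTheory

variable {X Y ι : Type*} [EMetricSpace X] [EMetricSpace Y]

lemma exists_cover_ediam_le {f : ι → X → X} {c : NNReal}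
    (hf : ∀ i, LipschitzWith c (f i)) {K : Set X} (hK : K ⊆ ⋃ i, f i '' K) (n : ℕ) :
    ∃ t : (Fin n → ι) → Set X,
      K ⊆ ⋃ w, t w ∧ ∀ w, Metric.ediam (t w) ≤ (c : ℝ≥0∞) ^ n * Metric.ediam K := by
  induction n with
  | zero => exact ⟨fun _ => K, by simp [iUnion_const], by simp⟩
  | succ n ih =>
    obtain ⟨t, hcover, hdiam⟩ := ih
    refine ⟨fun w => f (w 0) '' t (Fin.tail w), fun x hx => ?_, fun w => ?_⟩
    · obtain ⟨i, y, hy, rfl⟩ := mem_iUnion.1 (hK hx)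
      obtain ⟨w, hw⟩ := mem_iUnion.1 (hcover hy)
      exact mem_iUnion.2 ⟨Fin.cons i w, y, by simpa using hw, by simp⟩
    · calc Metric.ediam (f (w 0) '' t (Fin.tail w))
          ≤ c * Metric.ediam (t (Fin.tail w)) := (hf _).ediam_image_le _
        _ ≤ c * (c ^ n * Metric.ediam K) := by gcongr; exact hdiam _
        _ = c ^ (n + 1) * Metric.ediam K := by rw [pow_succ', mul_assoc]

lemma hausdorffMeasure_le_of_subset_iUnion_image [MeasurableSpace X] [BorelSpace X] [Fintype ι]
    {f : ι → X → X} {c s : NNReal} (hc : c < 1) (hf : ∀ i, LipschitzWith c (f i))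
    (hs : Fintype.card ι * c ^ (s : ℝ) ≤ 1) {K : Set X} (hdiam : Metric.ediam K ≠ ∞)
    (hK : K ⊆ ⋃ i, f i '' K) : μH[s] K ≤ Metric.ediam K ^ (s : ℝ) := by
  choose t hcover ht using exists_cover_ediam_le hf hK
  have hs' : (Fintype.card ι : ℝ≥0∞) * (c : ℝ≥0∞) ^ (s : ℝ) ≤ 1 := by
    rw [← ENNReal.coe_rpow_of_nonneg _ s.coe_nonneg]
    exact_mod_cast hs
  have hr : Filter.Tendsto (fun n : ℕ => (c : ℝ≥0∞) ^ n * Metric.ediam K) Filter.atTop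
      (nhds 0) := by
    simpa using ENNReal.Tendsto.mul_const
      (ENNReal.tendsto_pow_atTop_nhds_zero_of_lt_one (by exact_mod_cast hc)) (Or.inr hdiam)
  have hsum (n : ℕ) : ∑ w, Metric.ediam (t n w) ^ (s : ℝ) ≤ Metric.ediam K ^ (s : ℝ) :=
    calc ∑ w, Metric.ediam (t n w) ^ (s : ℝ)
        ≤ ∑ _w : Fin n → ι, ((c : ℝ≥0∞) ^ n * Metric.ediam K) ^ (s : ℝ) := by
          gcongr with w; exact ht n w
      _ = (Fintype.card ι * (c : ℝ≥0∞) ^ (s : ℝ)) ^ n * Metric.ediam K ^ (s : ℝ) := by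
          rw [Finset.sum_const, ENNReal.mul_rpow_of_nonneg _ _ s.coe_nonneg, mul_pow,
            ← ENNReal.rpow_natCast, ← ENNReal.rpow_natCast (_ ^ (s : ℝ)), ← ENNReal.rpow_mul,
            ← ENNReal.rpow_mul, mul_comm (n : ℝ)]
          simp [mul_assoc]
      _ ≤ Metric.ediam K ^ (s : ℝ) := mul_le_of_le_one_left' (pow_le_one' hs' n)
  calc μH[s] K ≤ Filter.liminf (fun n => ∑ w, Metric.ediam (t n w) ^ (s : ℝ)) Filter.atTop :=
        Measure.hausdorffMeasure_le_liminf_sum _ K _ hr t (.of_forall ht) (.of_forall hcover)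
    _ ≤ Filter.liminf (fun _ : ℕ => Metric.ediam K ^ (s : ℝ)) Filter.atTop :=
        Filter.liminf_le_liminf (.of_forall hsum)
    _ = Metric.ediam K ^ (s : ℝ) := Filter.liminf_const _

lemma dimH_le_of_subset_iUnion_image [Fintype ι] {f : ι → X → X} {c s : NNReal} (hc : c < 1)
    (hf : ∀ i, LipschitzWith c (f i)) (hs : Fintype.card ι * c ^ (s : ℝ) ≤ 1) {K : Set X}
    (hdiam : Metric.ediam K ≠ ∞) (hK : K ⊆ ⋃ i, f i '' K) : dimH K ≤ s := by
  borelize X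
  exact dimH_le_of_hausdorffMeasure_ne_top <|
    ne_top_of_le_ne_top (ENNReal.rpow_ne_top_of_nonneg s.coe_nonneg hdiam)
      (hausdorffMeasure_le_of_subset_iUnion_image hc hf hs hdiam hK)

lemma dimH_range_le_of_edist_le {g : ι → X} {ψ : ι → Y} {C r : NNReal} (hr : 0 < r)
    (h : ∀ i j, edist (ψ i) (ψ j) ≤ C * edist (g i) (g j) ^ (r : ℝ)) :
    dimH (range ψ) ≤ dimH (range g) / r := by
  have hholder : HolderWith C r (ψ ∘ rangeSplitting g) := fun x y => by
    have hxy := h (rangeSplitting g x) (rangeSplitting g y)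
    rwa [apply_rangeSplitting g, apply_rangeSplitting g] at hxy
  have hsub : range ψ ⊆ range (ψ ∘ rangeSplitting g) := by
    rintro _ ⟨i, rfl⟩
    have hi := h (rangeSplitting g ⟨g i, mem_range_self i⟩) i
    rw [apply_rangeSplitting g, edist_self, ENNReal.zero_rpow_of_pos (by exact_mod_cast hr),
      mul_zero] at hi
    exact ⟨⟨g i, mem_range_self i⟩, edist_le_zero.1 hi⟩
  calc dimH (range ψ) ≤ dimH (range (ψ ∘ rangeSplitting g)) := dimH_mono hsub
    _ ≤ dimH (univ : Set (range g)) / r := hholder.dimH_range_le hr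
    _ = dimH (range g) / r := by
      rw [← isometry_subtype_coe.dimH_image, image_univ, Subtype.range_coe]

end Dimension

section Digits

open Real

lemma inv_pow_succ_le_abs_ofDigits_sub {b : ℕ} {x y : ℕ → Fin b} {n : ℕ}
    (hxy : ∀ i < n, x i = y i) (hn : 2 ≤ |((x n : ℕ) : ℤ) - (y n : ℕ)|) :
    ((b : ℝ) ^ (n + 1))⁻¹ ≤ |ofDigits x - ofDigits y| := by
  have hsum : ∑ i ∈ Finset.range n, ofDigitsTerm x i = ∑ i ∈ Finset.range n, ofDigitsTerm y i :=
    Finset.sum_congr rfl fun i hi => by simp [ofDigitsTerm, hxy i (Finset.mem_range.1 hi)]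
  set tail : ℝ := ofDigits (fun i => y (i + (n + 1))) - ofDigits (fun i => x (i + (n + 1)))
    with htail
  have hdiff : ofDigits x - ofDigits y =
      ((b : ℝ) ^ (n + 1))⁻¹ * (((x n : ℕ) : ℝ) - (y n : ℕ) - tail) := by
    rw [ofDigits_eq_sum_add_ofDigits x (n + 1), ofDigits_eq_sum_add_ofDigits y (n + 1),
      Finset.sum_range_succ, Finset.sum_range_succ, hsum, htail, ofDigitsTerm, ofDigitsTerm]
    ring
  have htail_le : |tail| ≤ 1 :=
    abs_sub_le_of_le_of_le (ofDigits_nonneg _) (ofDigits_le_one _) (ofDigits_nonneg _)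
      (ofDigits_le_one _) |>.trans_eq (sub_zero 1)
  have hn' : (2 : ℝ) ≤ |((x n : ℕ) : ℝ) - (y n : ℕ)| := by exact_mod_cast hn
  rw [hdiff, abs_mul, abs_of_nonneg (by positivity)]
  refine le_mul_of_one_le_right (by positivity) ?_
  linarith [abs_sub_abs_le_abs_sub (((x n : ℕ) : ℝ) - (y n : ℕ)) tail]

variable {b B : ℕ} {s : Fin b → Fin B}

lemma abs_ofDigits_sub_le_mul_rpow (hb : 1 < b) (hB : 1 < B)
    (hs : ∀ i j, i ≠ j → 2 ≤ |((s i : ℕ) : ℤ) - (s j : ℕ)|) (x y : ℕ → Fin b) :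
    |ofDigits x - ofDigits y| ≤
      b * |ofDigits (fun n => s (x n)) - ofDigits (fun n => s (y n))| ^ logb B b := by
  obtain rfl | hne := eq_or_ne x y
  · simp only [sub_self, abs_zero]
    positivity
  set n := PiNat.firstDiff x y
  have hagree (i : ℕ) (hi : i < n) : x i = y i := PiNat.apply_eq_of_lt_firstDiff hi
  have hB' : (1 : ℝ) < B := by exact_mod_cast hB
  have hpow : ((B : ℝ) ^ (n + 1))⁻¹ ^ logb B b = ((b : ℝ) ^ (n + 1))⁻¹ := by
    rw [inv_rpow (by positivity), ← rpow_natCast, ← rpow_mul (by positivity), mul_comm,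
      rpow_mul (by positivity), rpow_logb (by positivity) hB'.ne' (by positivity), rpow_natCast]
  calc |ofDigits x - ofDigits y| ≤ ((b : ℝ) ^ n)⁻¹ := abs_ofDigits_sub_ofDigits_le hagree
    _ = b * ((B : ℝ) ^ (n + 1))⁻¹ ^ logb B b := by
      rw [hpow, pow_succ]
      field_simp
    _ ≤ _ := by
      gcongr
      · exact logb_nonneg hB' (by exact_mod_cast hb.le)
      · exact inv_pow_succ_le_abs_ofDigits_sub (fun i hi => congrArg s (hagree i hi))
          (hs _ _ (PiNat.apply_firstDiff_ne hne))

lemma ofReal_logb_le_dimH_range_ofDigits (hb : 1 < b)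
    (hs : ∀ i j, i ≠ j → 2 ≤ |((s i : ℕ) : ℤ) - (s j : ℕ)|) :
    ENNReal.ofReal (logb B b) ≤ dimH (range fun x : ℕ → Fin b => ofDigits fun n => s (x n)) := by
  have hinj : Function.Injective s := fun i j hij => by
    by_contra hne
    simpa [hij] using hs i j hne
  have hB : 1 < B := hb.trans_le (by simpa using Fintype.card_le_of_injective s hinj)
  have hr : 0 < logb B b := logb_pos (by exact_mod_cast hB) (by exact_mod_cast hb)
  have hrange : range (ofDigits (b := b)) = Icc 0 1 :=
    Subset.antisymm (range_subset_iff.2 fun x => ⟨ofDigits_nonneg x, ofDigits_le_one x⟩)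
      (image_univ ▸ ofDigits_SurjOn hb)
  have hdim := dimH_range_le_of_edist_le (ψ := ofDigits) (g := fun x => ofDigits fun n => s (x n))
      (C := b) (toNNReal_pos.2 hr) fun x y => by
    have h := abs_ofDigits_sub_le_mul_rpow hb hB hs x y
    rw [edist_dist, edist_dist, Real.dist_eq, Real.dist_eq, coe_toNNReal _ hr.le,
      ENNReal.ofReal_rpow_of_nonneg (abs_nonneg _) hr.le, ENNReal.coe_natCast,
      ← ENNReal.ofReal_natCast, ← ENNReal.ofReal_mul (by positivity)]
    exact ENNReal.ofReal_le_ofReal h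
  rw [hrange, dimH_of_nonempty_interior (by simp), Module.finrank_self, Nat.cast_one,
    ENNReal.le_div_iff_mul_le (by simp [hr]) (by simp), one_mul] at hdim
  exact hdim

lemma ofDigits_mem_of_forall_add_div_mem (hb : 1 < b) {K : Set ℝ} (hclosed : IsClosed K)
    (hne : K.Nonempty) {d : ℕ → Fin b} (hd : ∀ n, ∀ x ∈ K, (x + (d n : ℕ)) / b ∈ K) :
    ofDigits d ∈ K := by
  have hpartial (n : ℕ) :
      ∀ x ∈ K, ∑ i ∈ Finset.range n, ofDigitsTerm d i + x / (b : ℝ) ^ n ∈ K := by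
    induction n with
    | zero => simp
    | succ n ih =>
      intro x hx
      convert ih _ (hd n x hx) using 1
      rw [Finset.sum_range_succ, ofDigitsTerm, div_div, ← pow_succ']
      ring
  obtain ⟨x, hx⟩ := hne
  have hpow : Filter.Tendsto (fun n => x / (b : ℝ) ^ n) Filter.atTop (nhds 0) :=
    tendsto_const_nhds.div_atTop (tendsto_pow_atTop_atTop_of_one_lt (by exact_mod_cast hb))
  have hlim := summable_ofDigitsTerm (digits := d).hasSum.tendsto_sum_nat.add hpow
  rw [add_zero] at hlim
  exact hclosed.mem_of_tendsto hlim (.of_forall fun n => hpartial n x hx)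

end Digits

section Attractor

variable {a : ℝ} {K : Set ℝ}

lemma lipschitzWith_S1 (a : ℝ) (i : Fin 3) : LipschitzWith 7⁻¹ (S1 a i) := by
  refine LipschitzWith.of_dist_le_mul fun x y => le_of_eq ?_
  have hsub : S1 a i x - S1 a i y = 7⁻¹ * (x - y) := by
    fin_cases i <;> simp [S1] <;> ring
  rw [Real.dist_eq, hsub, abs_mul, Real.dist_eq]
  simp

lemma dimH_le_ofReal_logb_three (hbdd : Bornology.IsBounded K) (hK : K = ⋃ i, S1 a i '' K) :
    dimH K ≤ ENNReal.ofReal (Real.logb 7 3) := by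
  refine dimH_le_of_subset_iUnion_image (by rw [← NNReal.coe_lt_coe]; norm_num)
    (lipschitzWith_S1 a) (le_of_eq ?_) hbdd.ediam_ne_top hK.subset
  have hlog : 0 ≤ Real.logb 7 3 := Real.logb_nonneg (by norm_num) (by norm_num)
  rw [← NNReal.coe_inj]
  simp [Real.coe_toNNReal _ hlog, Real.inv_rpow, Real.rpow_logb]

lemma ofReal_logb_two_le_dimH (hne : K.Nonempty) (hclosed : IsClosed K)
    (hK : K = ⋃ i, S1 a i '' K) : ENNReal.ofReal (Real.logb 7 2) ≤ dimH K := by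
  have hmap (i : Fin 3) (x : ℝ) (hx : x ∈ K) : S1 a i x ∈ K := by
    rw [hK]
    exact mem_iUnion_of_mem i (mem_image_of_mem _ hx)
  let s : Fin 2 → Fin 7 := ![0, 6]
  have hs : ∀ i j, i ≠ j → 2 ≤ |((s i : ℕ) : ℤ) - (s j : ℕ)| := by decide
  have hstep (i : Fin 2) (x : ℝ) (hx : x ∈ K) : (x + (s i : ℕ)) / (7 : ℕ) ∈ K := by
    fin_cases i
    · simpa [s, S1] using hmap 0 x hx
    · simpa [s, S1, add_div] using hmap 2 x hx
  have hcantor : range (fun x : ℕ → Fin 2 => Real.ofDigits fun n => s (x n)) ⊆ K :=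
    range_subset_iff.2 fun x =>
      ofDigits_mem_of_forall_add_div_mem (by norm_num) hclosed hne fun n => hstep (x n)
  exact_mod_cast (ofReal_logb_le_dimH_range_ofDigits (by norm_num) hs).trans (dimH_mono hcantor)

end Attractor

section Translations

variable {a : ℝ}

/-- The digits of the system `S1 a`, that is, the translation parts of its maps. -/
noncomputable def digit (a : ℝ) : Fin 3 → ℝ := ![0, a, 6 / 7]

/-- The set of all translation amounts `a_{σ,τ}` of pairs of words of equal length. -/
def translationSet (a : ℝ) : Set ℝ :=
  {t | ∃ σ τ : List (Fin 3), σ.length = τ.length ∧ amt1 a σ τ = t}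

lemma S1_apply (a : ℝ) (i : Fin 3) (x : ℝ) : S1 a i x = x / 7 + digit a i := by
  fin_cases i <;> simp [S1, digit]

lemma Sw1_apply (a : ℝ) (σ : List (Fin 3)) (x : ℝ) :
    Sw1 a σ x = Sw1 a σ 0 + x / 7 ^ σ.length := by
  induction σ generalizing x with
  | nil => simp [Sw1]
  | cons i σ ih =>
    simp only [Sw1, Function.comp_apply, S1_apply, List.length_cons]
    rw [ih x]
    ring

lemma Sw1_append (a : ℝ) (σ τ : List (Fin 3)) : Sw1 a (σ ++ τ) = Sw1 a σ ∘ Sw1 a τ := by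
  induction σ with
  | nil => rfl
  | cons i σ ih => rw [List.cons_append, Sw1, Sw1, ih, Function.comp_assoc]

lemma Sw1_eq_Sw1_add_amt1 {σ τ : List (Fin 3)} (h : σ.length = τ.length) (x : ℝ) :
    Sw1 a τ x = Sw1 a σ (x + amt1 a σ τ) := by
  rw [Sw1_apply a τ, Sw1_apply a σ, amt1, ← h]
  field_simp
  ring

lemma amt1_concat {σ τ : List (Fin 3)} (h : σ.length = τ.length) (i j : Fin 3) :
    amt1 a (σ ++ [i]) (τ ++ [j]) = 7 * (amt1 a σ τ + (digit a j - digit a i)) := by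
  have hconcat (ρ : List (Fin 3)) (k : Fin 3) :
      Sw1 a (ρ ++ [k]) 0 = Sw1 a ρ 0 + digit a k / 7 ^ ρ.length := by
    rw [Sw1_append, Function.comp_apply, Sw1_apply]
    simp [Sw1, S1_apply]
  rw [amt1, amt1, hconcat, hconcat, List.length_append, List.length_singleton, h]
  field_simp
  ring

lemma zero_mem_translationSet (a : ℝ) : 0 ∈ translationSet a := ⟨[], [], rfl, by simp [amt1]⟩

lemma neg_mem_translationSet {t : ℝ} (ht : t ∈ translationSet a) : -t ∈ translationSet a := by
  obtain ⟨σ, τ, h, rfl⟩ := ht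
  exact ⟨τ, σ, h.symm, by rw [amt1, amt1, h]; ring⟩

lemma seven_mul_add_mem_translationSet {t : ℝ} (ht : t ∈ translationSet a) (i j : Fin 3) :
    7 * (t + (digit a j - digit a i)) ∈ translationSet a := by
  obtain ⟨σ, τ, h, rfl⟩ := ht
  exact ⟨σ ++ [i], τ ++ [j], by simp [h], amt1_concat h i j⟩

lemma translationSet_subset {G : Set ℝ} (hzero : 0 ∈ G)
    (hstep : ∀ t ∈ G, ∀ i j, 7 * (t + (digit a j - digit a i)) ∈ G) : translationSet a ⊆ G := by
  rintro _ ⟨σ, τ, h, rfl⟩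
  induction σ using List.reverseRecOn generalizing τ with
  | nil =>
    obtain rfl : τ = [] := List.length_eq_zero_iff.1 h.symm
    simpa [amt1] using hzero
  | append_singleton σ i ih =>
    obtain rfl | ⟨τ, j, rfl⟩ := τ.eq_nil_or_concat'
    · simp at h
    · have h' : σ.length = τ.length := by simpa using h
      rw [amt1_concat h']
      exact hstep _ (ih τ h') i j

lemma amt1_mem_Ntype1 {σ τ : List (Fin 3)} (h : σ.length = τ.length)
    (hlt : |amt1 a σ τ| < 1) : amt1 a σ τ ∈ Ntype1 a σ := by
  obtain ⟨hgt, hlt⟩ := abs_lt.1 hlt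
  obtain ⟨x, hx⟩ : (Ioo 0 1 ∩ Ioo (-amt1 a σ τ) (1 - amt1 a σ τ)).Nonempty := by
    rw [Ioo_inter_Ioo, nonempty_Ioo, max_lt_iff, lt_min_iff, lt_min_iff]
    exact ⟨⟨one_pos, by linarith⟩, by linarith, by linarith⟩
  refine ⟨τ, h.symm, ⟨Sw1 a τ x, ⟨x + amt1 a σ τ, ?_, ?_⟩, x, hx.1, rfl⟩, rfl⟩
  · exact ⟨by linarith [hx.2.1], by linarith [hx.2.2]⟩
  · exact (Sw1_eq_Sw1_add_amt1 h x).symm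

lemma Ntype1_finite (a : ℝ) (σ : List (Fin 3)) : (Ntype1 a σ).Finite := by
  refine ((List.finite_length_eq (Fin 3) σ.length).image (amt1 a σ)).subset ?_
  rintro _ ⟨τ, hτ, -, rfl⟩
  exact ⟨τ, hτ, rfl⟩

lemma FTCco1.finite_translationSet_inter (h : FTCco1 a) :
    (translationSet a ∩ {t | |t| < 1}).Finite := by
  refine (h.sUnion (forall_mem_range.2 (Ntype1_finite a))).subset ?_
  rintro _ ⟨⟨σ, τ, hl, rfl⟩, hlt⟩
  exact ⟨Ntype1 a σ, mem_range_self σ, amt1_mem_Ntype1 hl hlt⟩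

end Translations

section DefectSequence

/-- Defects `v k` of translation amounts `1 - v k` of the system `S1 ((1 - v 0) / 7)`, each reached
from the preceding one: the recurrence says that `k + 3` steps `t ↦ 7 * t - 6` followed by two steps
`t ↦ 7 * t - (5 + v 0)` map `1 - v k` to `-(1 - v (k + 1))`. -/
structure IsDefectSequence (v : ℕ → ℝ) : Prop where
  pos (k : ℕ) : 0 < v k
  recurrence (k : ℕ) : 7 ^ (k + 5) * v k = 10 - 8 * v 0 - v (k + 1)

lemma exists_eq_mul_one_sub_succ {q : ℕ → ℝ} {c : ℝ} (hc : c < 1) (hq : ∀ k, |q k| ≤ c) :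
    ∃ r : ℕ → ℝ, ∀ k, |r k| ≤ c / (1 - c) ∧ r k = q k * (1 - r (k + 1)) := by
  -- Iterating the recurrence gives `r k = q k - q k * q (k + 1) + q k * q (k + 1) * q (k + 2) - ⋯`.
  let term (k n : ℕ) : ℝ := (-1) ^ n * ∏ i ∈ Finset.range (n + 1), q (k + i)
  have hc0 : 0 ≤ c := (abs_nonneg _).trans (hq 0)
  have hterm_le (k n : ℕ) : ‖term k n‖ ≤ c * c ^ n := by
    calc ‖term k n‖ = ∏ i ∈ Finset.range (n + 1), |q (k + i)| := by
          simp [term, norm_prod]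
      _ ≤ ∏ _i ∈ Finset.range (n + 1), c :=
          Finset.prod_le_prod (fun _ _ => abs_nonneg _) fun i _ => hq (k + i)
      _ = c * c ^ n := by rw [Finset.prod_const, Finset.card_range, pow_succ']
  have hgeom : HasSum (fun n => c * c ^ n) (c / (1 - c)) :=
    (hasSum_geometric_of_lt_one hc0 hc).mul_left c
  have hterm_succ (k n : ℕ) : term k (n + 1) = -q k * term (k + 1) n := by
    simp only [term]
    rw [Finset.prod_range_succ' _ (n + 1), pow_succ]
    simp only [add_zero, add_assoc, add_comm 1]
    ring
  refine ⟨fun k => ∑' n, term k n, fun k => ⟨tsum_of_norm_bounded hgeom (hterm_le k), ?_⟩⟩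
  dsimp only
  rw [(Summable.of_norm_bounded hgeom.summable (hterm_le k)).tsum_eq_zero_add]
  simp only [hterm_succ, tsum_mul_left]
  simp only [term, pow_zero, one_mul, zero_add, Finset.range_one, Finset.prod_singleton, add_zero]
  ring

lemma exists_isDefectSequence : ∃ v, IsDefectSequence v := by
  have hq (k : ℕ) : |((7 : ℝ) ^ (k + 5))⁻¹| ≤ 1 / 7 := by
    rw [abs_of_nonneg (by positivity), ← one_div]
    gcongr
    exact le_self_pow₀ (by norm_num) (by omega)
  obtain ⟨r, hr⟩ := exists_eq_mul_one_sub_succ (by norm_num) hq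
  have hrpos (k : ℕ) : 0 < r k := by
    rw [(hr k).2]
    have hnext := (abs_le.1 (hr (k + 1)).1).2
    norm_num at hnext
    exact mul_pos (by positivity) (by linarith)
  have hr0 := hrpos 0
  -- The scale `c = 10 / (1 + 8 * r 0)` solves `c = 10 - 8 * (c * r 0)`.
  refine ⟨fun k => 10 / (1 + 8 * r 0) * r k, fun k => mul_pos (by positivity) (hrpos k),
    fun k => ?_⟩
  have hrec : 7 ^ (k + 5) * r k = 1 - r (k + 1) := by
    rw [(hr k).2, mul_inv_cancel_left₀ (by positivity)]
  calc 7 ^ (k + 5) * (10 / (1 + 8 * r 0) * r k)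
      = 10 / (1 + 8 * r 0) * (7 ^ (k + 5) * r k) := by ring
    _ = 10 - 8 * (10 / (1 + 8 * r 0) * r 0) - 10 / (1 + 8 * r 0) * r (k + 1) := by
      rw [hrec]
      field_simp
      ring

namespace IsDefectSequence

variable {v : ℕ → ℝ} (hv : IsDefectSequence v)
include hv

lemma seven_pow_mul_lt (k : ℕ) : 7 ^ (k + 5) * v k < 10 := by
  rw [hv.recurrence]
  linarith [hv.pos 0, hv.pos (k + 1)]

lemma lt_one_div_thousand (k : ℕ) : v k < 1 / 1000 := by
  have hpow : (7 : ℝ) ^ 5 * v k ≤ 7 ^ (k + 5) * v k := by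
    have := (hv.pos k).le
    gcongr <;> norm_num
  linarith [hv.seven_pow_mul_lt k]

lemma strictAnti : StrictAnti v := by
  refine strictAnti_nat_of_succ_lt fun k => ?_
  have hnext : 7 * (7 ^ (k + 5) * v (k + 1)) < 10 := by
    calc 7 * (7 ^ (k + 5) * v (k + 1)) = 7 ^ (k + 1 + 5) * v (k + 1) := by ring
      _ < 10 := hv.seven_pow_mul_lt (k + 1)
  have hcurrent : 9 < 7 ^ (k + 5) * v k := by
    rw [hv.recurrence]
    linarith [hv.lt_one_div_thousand 0, hv.lt_one_div_thousand (k + 1)]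
  refine lt_of_mul_lt_mul_left (a := (7 : ℝ) ^ (k + 5)) ?_ (by positivity)
  linarith

lemma seven_pow_add_three_mul (k : ℕ) :
    7 ^ (k + 3) * v k = (10 - 8 * v 0 - v (k + 1)) / 49 := by
  rw [← hv.recurrence]
  ring

lemma seven_pow_mul_lt_of_le {j k : ℕ} (hj : j ≤ k + 3) : 7 ^ j * v k < 10 / 49 := by
  have hpow : (7 : ℝ) ^ j * v k ≤ 7 ^ (k + 3) * v k := by
    have := (hv.pos k).le
    gcongr
    norm_num
  linarith [hv.seven_pow_add_three_mul k, hv.pos 0, hv.pos (k + 1)]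

lemma one_sub_mem_translationSet (k : ℕ) : 1 - v k ∈ translationSet ((1 - v 0) / 7) := by
  induction k with
  | zero =>
    convert seven_mul_add_mem_translationSet (zero_mem_translationSet _) 0 1 using 1
    simp only [digit, Matrix.cons_val_zero, Matrix.cons_val_one]
    ring
  | succ k ih =>
    have hscale (j : ℕ) : 1 - 7 ^ j * v k ∈ translationSet ((1 - v 0) / 7) := by
      induction j with
      | zero => simpa using ih
      | succ j ih =>
        convert seven_mul_add_mem_translationSet ih 2 0 using 1
        simp only [digit, Matrix.cons_val]
        ring
    have hreturn := seven_mul_add_mem_translationSet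
      (seven_mul_add_mem_translationSet (hscale (k + 3)) 2 1) 2 1
    convert neg_mem_translationSet hreturn using 1
    rw [hv.seven_pow_add_three_mul]
    simp only [digit, Matrix.cons_val]
    ring

lemma not_ftcco1 : ¬ FTCco1 ((1 - v 0) / 7) := fun h => by
  have hinj : Function.Injective fun k => 1 - v k :=
    sub_right_injective.comp hv.strictAnti.injective
  have hsub : (range fun k => 1 - v k) ⊆ translationSet ((1 - v 0) / 7) ∩ {t | |t| < 1} := by
    rintro _ ⟨k, rfl⟩
    have hlt : |1 - v k| < 1 :=
      abs_lt.2 ⟨by linarith [hv.lt_one_div_thousand k], by linarith [hv.pos k]⟩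
    exact ⟨hv.one_sub_mem_translationSet k, hlt⟩
  exact infinite_range_of_injective hinj (h.finite_translationSet_inter.subset hsub)

end IsDefectSequence

lemma seven_mul_digit_sub_mem (δ : ℝ) (i j : Fin 3) :
    7 * (digit ((1 - δ) / 7) j - digit ((1 - δ) / 7) i) ∈
      ({-6, -(5 + δ), 0, 1 - δ, -(1 - δ), 6, 5 + δ} : Set ℝ) := by
  have hlow : 7 * ((1 - δ) / 7) = 1 - δ := by ring
  have hhigh : 7 * (6 / 7 - (1 - δ) / 7) = 5 + δ := by ring
  have hhigh' : 7 * ((1 - δ) / 7 - 6 / 7) = -(5 + δ) := by ring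
  have hsix : (7 : ℝ) * (6 / 7) = 6 := by norm_num
  fin_cases i <;> fin_cases j <;> simp [digit, hlow, hhigh, hhigh', hsix]

/-- A predicate satisfied by the absolute values of all translation amounts of the system
`S1 ((1 - v 0) / 7)`, while it fails on `(0, 3 / 10)` for a defect sequence `v`. Here `nearOne` and
`middle` are the numbers visited on the way from `1 - v k` to `1 - v (k + 1)`, and `low` and `far`
absorb all departures from that route. -/
inductive InTrap (v : ℕ → ℝ) : ℝ → Prop
  | zero : InTrap v 0
  | nearOne (k j : ℕ) (hj : j ≤ k + 3) : InTrap v (1 - 7 ^ j * v k)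
  | middle (k : ℕ) : InTrap v ((4 + v 0 + v (k + 1)) / 7)
  | low {t : ℝ} (hge : 3 / 10 ≤ t) (hle : t ≤ 1 / 2) : InTrap v t
  | far {t : ℝ} (hge : 1 ≤ t) : InTrap v t

namespace IsDefectSequence

variable {v : ℕ → ℝ} (hv : IsDefectSequence v) {t : ℝ}
include hv

lemma eq_zero_or_le_of_inTrap (ht : InTrap v t) : t = 0 ∨ 3 / 10 ≤ t := by
  cases ht with
  | zero => exact .inl rfl
  | nearOne k j hj => right; linarith [hv.seven_pow_mul_lt_of_le hj]
  | middle k => right; linarith [hv.pos 0, hv.pos (k + 1)]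
  | low hge _ => exact .inr hge
  | far hge => right; linarith

lemma inTrap_abs_seven_mul_sub_six (ht : InTrap v t) : InTrap v |7 * t - 6| := by
  have h0 := hv.lt_one_div_thousand 0
  cases ht with
  | zero => exact .far (by norm_num)
  | nearOne k j hj =>
    have hnext := hv.lt_one_div_thousand (k + 1)
    obtain hlt | rfl := hj.lt_or_eq
    · have hj' : j + 1 ≤ k + 3 := hlt
      have hpow : 7 ^ (j + 1) * v k = 7 * (7 ^ j * v k) := by ring
      have habs : |7 * (1 - 7 ^ j * v k) - 6| = 1 - 7 ^ (j + 1) * v k := by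
        rw [abs_of_nonneg] <;> linarith [hv.seven_pow_mul_lt_of_le hj']
      exact habs ▸ .nearOne k (j + 1) hj'
    · rw [hv.seven_pow_add_three_mul, abs_of_nonpos (by linarith)]
      exact .low (by linarith) (by linarith [hv.pos 0, hv.pos (k + 1)])
  | middle k => exact .far (le_abs.2 (.inr (by linarith [hv.lt_one_div_thousand (k + 1)])))
  | low _ hle => exact .far (le_abs.2 (.inr (by linarith)))
  | far hge => exact .far (le_abs.2 (.inl (by linarith)))

lemma inTrap_abs_seven_mul_sub_five_add (ht : InTrap v t) : InTrap v |7 * t - (5 + v 0)| := by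
  have hpos := hv.pos 0
  have h0 := hv.lt_one_div_thousand 0
  cases ht with
  | zero => exact .far (le_abs.2 (.inr (by linarith)))
  | nearOne k j hj =>
    obtain hlt | rfl := hj.lt_or_eq
    · have hj' : j + 1 ≤ k + 3 := hlt
      have hpow : 7 ^ (j + 1) * v k = 7 * (7 ^ j * v k) := by ring
      exact .far (le_abs.2 (.inl (by linarith [hv.seven_pow_mul_lt_of_le hj'])))
    · have habs : |7 * (1 - 7 ^ (k + 3) * v k) - (5 + v 0)| = (4 + v 0 + v (k + 1)) / 7 := by
        rw [hv.seven_pow_add_three_mul, abs_of_nonneg] <;> linarith [hv.pos (k + 1)]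
      exact habs ▸ .middle k
  | middle k =>
    have habs : |7 * ((4 + v 0 + v (k + 1)) / 7) - (5 + v 0)| = 1 - 7 ^ 0 * v (k + 1) := by
      rw [abs_of_nonpos] <;> linarith [hv.lt_one_div_thousand (k + 1)]
    exact habs ▸ .nearOne (k + 1) 0 (Nat.zero_le _)
  | low _ hle => exact .far (le_abs.2 (.inr (by linarith)))
  | far hge => exact .far (le_abs.2 (.inl (by linarith)))

lemma inTrap_abs_seven_mul_digit_sub (i j : Fin 3) :
    InTrap v |7 * (digit ((1 - v 0) / 7) j - digit ((1 - v 0) / 7) i)| := by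
  have hgap : InTrap v |1 - v 0| := by
    rw [abs_of_nonneg (by linarith [hv.lt_one_div_thousand 0])]
    simpa using InTrap.nearOne (v := v) 0 0 (Nat.zero_le _)
  have hfive : InTrap v |5 + v 0| := .far (le_abs.2 (.inl (by linarith [hv.pos 0])))
  have hsix : InTrap v |6| := .far (by norm_num)
  obtain h | h | h | h | h | h | h := seven_mul_digit_sub_mem (v 0) i j <;> rw [h]
  · rwa [abs_neg]
  · rwa [abs_neg]
  · simpa using InTrap.zero
  · exact hgap
  · rwa [abs_neg]
  · exact hsix
  · exact hfive

lemma inTrap_abs_seven_mul_add (ht : InTrap v t) (i j : Fin 3) :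
    InTrap v |7 * (t + (digit ((1 - v 0) / 7) j - digit ((1 - v 0) / 7) i))| := by
  have hpos := hv.pos 0
  obtain rfl | hge := hv.eq_zero_or_le_of_inTrap ht
  · simpa only [zero_add] using hv.inTrap_abs_seven_mul_digit_sub i j
  rw [mul_add]
  obtain h | h | h := seven_mul_digit_sub_mem (v 0) i j
  · rw [h, ← sub_eq_add_neg]
    exact hv.inTrap_abs_seven_mul_sub_six ht
  · rw [h, ← sub_eq_add_neg]
    exact hv.inTrap_abs_seven_mul_sub_five_add ht
  · refine .far (le_abs.2 (.inl ?_))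
    simp only [mem_insert_iff, mem_singleton_iff] at h
    obtain h | h | h | h | h := h <;> linarith [hv.lt_one_div_thousand 0]

lemma translationSet_subset_inTrap : translationSet ((1 - v 0) / 7) ⊆ {t | InTrap v |t|} := by
  refine translationSet_subset (by simpa using InTrap.zero) fun t ht i j => ?_
  obtain habs | habs := abs_choice t
  · have hstep := hv.inTrap_abs_seven_mul_add ht i j
    rwa [habs] at hstep
  · have hstep := hv.inTrap_abs_seven_mul_add ht j i
    have hneg : 7 * (t + (digit ((1 - v 0) / 7) j - digit ((1 - v 0) / 7) i)) =
        -(7 * (-t + (digit ((1 - v 0) / 7) i - digit ((1 - v 0) / 7) j))) := by ring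
    rwa [mem_ofPred_eq, hneg, abs_neg, ← habs]

lemma wsp1 : WSP1 ((1 - v 0) / 7) := by
  refine ⟨3 / 10, by norm_num, fun σ τ hl hne => ?_⟩
  have htrap : InTrap v |amt1 ((1 - v 0) / 7) σ τ| :=
    hv.translationSet_subset_inTrap ⟨σ, τ, hl, rfl⟩
  exact (hv.eq_zero_or_le_of_inTrap htrap).resolve_left (abs_ne_zero.2 hne)

end IsDefectSequence

end DefectSequence

theorem stmt2 : ∃ a ∈ Ioo (0 : ℝ) (1 / 7),
    WSP1 a ∧ ¬ FTCco1 a ∧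
    ∀ K : Set ℝ, K.Nonempty → IsCompact K → K = ⋃ i, S1 a i '' K →
      0 < dimH K ∧ dimH K < 1 := by
  obtain ⟨v, hv⟩ := exists_isDefectSequence
  have ha : (1 - v 0) / 7 ∈ Ioo 0 (1 / 7) :=
    ⟨by linarith [hv.lt_one_div_thousand 0], by linarith [hv.pos 0]⟩
  refine ⟨(1 - v 0) / 7, ha, hv.wsp1, hv.not_ftcco1, fun K hne hcompact hK => ⟨?_, ?_⟩⟩
  · have hlog : 0 < Real.logb 7 2 := Real.logb_pos (by norm_num) (by norm_num)
    exact (ENNReal.ofReal_pos.2 hlog).trans_le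
      (ofReal_logb_two_le_dimH hne hcompact.isClosed hK)
  · have hlog : Real.logb 7 3 < 1 :=
      (Real.logb_lt_iff_lt_rpow (by norm_num) (by norm_num)).2 (by norm_num)
    exact (dimH_le_ofReal_logb_three hcompact.isBounded hK).trans_lt
      (ENNReal.ofReal_lt_one.2 hlog)
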